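/- If G ∈ F_q^{m×n} is triorthogonal with parameter k, then dim_{F_q} 𝒢 = k + dim_{F_q} 𝒢_0, and consequently dim_{F_q} 𝒢^⊥ = n − k − dim_{F_q} 𝒢_0 (so the associated CSS code encodes exactly k qudits of dimension q). -/

import Mathlib

open scoped Classical

noncomputable section

/-- A matrix `G ∈ F^{m×n}` (rows `G a`) is *triorthogonal* with parameter `k`
and weights `σ : Fin n → F`, `τ : Fin k → F` (all nonzero) if
(i) `∑ i, (G a i)^4 (G b i)^2 (G c i)` is `1` when `a = b = c` is among the first `k`
rows and `0` otherwise, and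
(ii) `∑ i, σ i * G a i * G b i` is `τ a` when `a = b` is among the first `k` rows and
`0` otherwise. -/
def IsTriorthogonal {F : Type} [Field F] {m n k : ℕ} (G : Fin m → Fin n → F)
    (σ : Fin n → F) (τ : Fin k → F) : Prop :=
  (∀ i, σ i ≠ 0) ∧ (∀ a, τ a ≠ 0) ∧
  (∀ a b c : Fin m, ∑ i, (G a i) ^ 4 * (G b i) ^ 2 * (G c i) =
      if a = b ∧ b = c ∧ (a : ℕ) < k then 1 else 0) ∧
  (∀ a b : Fin m, ∑ i, σ i * G a i * G b i =
      if h : a = b ∧ (a : ℕ) < k then τ ⟨(a : ℕ), h.2⟩ else 0)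

/-- The dual code `V^⊥ = {x : ∑ i, x i * y i = 0 for all y ∈ V}`. -/
def dualCode {F : Type} [Field F] {n : ℕ} (V : Submodule F (Fin n → F)) :
    Submodule F (Fin n → F) where
  carrier := {x | ∀ y ∈ V, ∑ i, x i * y i = 0}
  add_mem' := by
    intro a b ha hb y hy
    calc ∑ i, (a + b) i * y i = (∑ i, a i * y i) + ∑ i, b i * y i := by
          rw [← Finset.sum_add_distrib]
          exact Finset.sum_congr rfl fun i _ => by simp [add_mul]
      _ = 0 := by rw [ha y hy, hb y hy]; ring
  zero_mem' := by intro y hy; simp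
  smul_mem' := by
    intro c a ha y hy
    calc ∑ i, (c • a) i * y i = c * ∑ i, a i * y i := by
          rw [Finset.mul_sum]
          exact Finset.sum_congr rfl fun i _ => by simp [mul_assoc]
      _ = 0 := by rw [ha y hy]; ring

/-!
Pairing with the first `k` rows under the `σ`-weighted dot product kills the last `m - k` rows and
acts diagonally, with the nonzero entries `τ`, on the first `k`. So the first `k` rows are
independent and their span meets that of the remaining rows trivially. The dual code is the
orthogonal complement for the nondegenerate unweighted dot product.
-/

theorem linearIndependent_pi_comp_of_pairwise_eq_zero {R M ι : Type*} [Ring R] [IsDomain R]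
    [AddCommMonoid M] [Module R M] {φ : ι → Module.Dual R M} {u : ι → M}
    (hoff : Pairwise fun i j => φ i (u j) = 0) (hdiag : ∀ i, φ i (u i) ≠ 0) :
    LinearIndependent R (LinearMap.pi φ ∘ u) := by
  have hsingle : LinearMap.pi φ ∘ u = fun j => Pi.single j (φ j (u j)) := by
    ext j i
    obtain rfl | hij := eq_or_ne i j
    · simp
    · simp [hij, hoff hij]
  rw [hsingle]
  exact Pi.linearIndependent_single_of_ne_zero hdiag

section Field

variable {K V ι : Type*} [Field K] [AddCommGroup V] [Module K V]

theorem finrank_span_range_sup_of_le_ker [Fintype ι] {W : Type*} [AddCommGroup W] [Module K W]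
    {f : V →ₗ[K] W} {u : ι → V} (hu : LinearIndependent K (f ∘ u)) {P : Submodule K V}
    [FiniteDimensional K P] (hP : P ≤ LinearMap.ker f) :
    Module.finrank K ↥(Submodule.span K (Set.range u) ⊔ P) =
      Fintype.card ι + Module.finrank K P := by
  have hdisj : Disjoint (Submodule.span K (Set.range u)) P :=
    (Submodule.range_ker_disjoint hu).mono_right hP
  have : FiniteDimensional K (Submodule.span K (Set.range u)) :=
    FiniteDimensional.span_of_finite K (Set.finite_range u)
  rw [← finrank_span_eq_card (LinearIndependent.of_comp f hu),
    ← Submodule.finrank_sup_add_finrank_inf_eq, hdisj.eq_bot, finrank_bot, add_zero]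

theorem finrank_span_range_of_isOrthoᵢ [Finite ι] {B : LinearMap.BilinForm K V} {v : ι → V}
    (hB : B.IsOrthoᵢ v) (s : Set ι) (hs : ∀ i ∈ s, B (v i) (v i) ≠ 0) :
    Module.finrank K (Submodule.span K (Set.range v)) =
      s.ncard + Module.finrank K (Submodule.span K (v '' sᶜ)) := by
  have : Fintype s := Fintype.ofFinite s
  have : FiniteDimensional K (Submodule.span K (v '' sᶜ)) :=
    FiniteDimensional.span_of_finite K (Set.toFinite _)
  let φ : s → Module.Dual K V := fun i => B (v i)
  have hind : LinearIndependent K (LinearMap.pi φ ∘ fun i : s => v i) :=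
    linearIndependent_pi_comp_of_pairwise_eq_zero
      (fun _ _ hij => hB (Subtype.coe_injective.ne hij)) fun i => hs i i.2
  have hker : Submodule.span K (v '' sᶜ) ≤ LinearMap.ker (LinearMap.pi φ) := by
    rw [Submodule.span_le]
    rintro _ ⟨j, hj, rfl⟩
    exact LinearMap.mem_ker.2 (funext fun i => hB (ne_of_mem_of_not_mem i.2 hj))
  rw [← Nat.card_coe_set_eq, Nat.card_eq_fintype_card,
    ← finrank_span_range_sup_of_le_ker hind hker, ← Set.image_eq_range, ← Submodule.span_union,
    ← Set.image_union, Set.union_compl_self, Set.image_univ]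

end Field

theorem nondegenerate_dotProductBilin {R ι : Type*} [CommSemiring R] [Fintype ι] :
    (dotProductBilin R R : LinearMap.BilinForm R (ι → R)).Nondegenerate :=
  ⟨fun x hx => dotProduct_eq_zero x hx,
    fun y hy => dotProduct_eq_zero y fun x => (dotProduct_comm y x).trans (hy x)⟩

theorem dualCode_eq_orthogonal {F : Type} [Field F] {n : ℕ} (V : Submodule F (Fin n → F)) :
    dualCode V = LinearMap.BilinForm.orthogonal (dotProductBilin F F) V := by
  ext x
  exact forall₂_congr fun y _ => by rw [← dotProduct, dotProduct_comm]; rfl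

theorem finrank_dualCode {F : Type} [Field F] {n : ℕ} (V : Submodule F (Fin n → F)) :
    Module.finrank F (dualCode V) = n - Module.finrank F V := by
  rw [dualCode_eq_orthogonal, LinearMap.BilinForm.finrank_orthogonal nondegenerate_dotProductBilin,
    Module.finrank_fin_fun]

theorem image_compl_range_castLE {α : Type*} {k m : ℕ} (hkm : k ≤ m) (f : Fin m → α) :
    f '' (Set.range (Fin.castLE hkm))ᶜ =
      Set.range fun a : Fin (m - k) => f ⟨k + (a : ℕ), by omega⟩ := by
  rw [Fin.range_castLE]
  ext x
  constructor
  · rintro ⟨b, hb, rfl⟩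
    have hkb : k ≤ b := not_lt.1 hb
    exact ⟨⟨b - k, by omega⟩, congrArg f (Fin.ext (Nat.add_sub_cancel' hkb))⟩
  · rintro ⟨a, rfl⟩
    exact ⟨_, not_lt.2 (Nat.le_add_right k a), rfl⟩

theorem finrank_rowspan_and_dual_general
    {m n k : ℕ} (hkm : k ≤ m) {F : Type} [Field F] (G : Fin m → Fin n → F)
    {B : LinearMap.BilinForm F (Fin n → F)} (hB : B.IsOrthoᵢ G)
    (hG : ∀ a : Fin k, B (G (Fin.castLE hkm a)) (G (Fin.castLE hkm a)) ≠ 0) :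
    Module.finrank F (Submodule.span F (Set.range G)) =
        k + Module.finrank F
          (Submodule.span F
            (Set.range fun a : Fin (m - k) => G ⟨k + (a : ℕ), by omega⟩)) ∧
    Module.finrank F (dualCode (Submodule.span F (Set.range G))) =
        n - k - Module.finrank F
          (Submodule.span F
            (Set.range fun a : Fin (m - k) => G ⟨k + (a : ℕ), by omega⟩)) := by
  have hrow := finrank_span_range_of_isOrthoᵢ hB (Set.range (Fin.castLE hkm))
    (Set.forall_mem_range.2 hG)
  rw [image_compl_range_castLE, Set.ncard_range_of_injective (Fin.castLE_injective hkm),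
    Nat.card_fin] at hrow
  exact ⟨hrow, by rw [finrank_dualCode, hrow, Nat.sub_add_eq]⟩

namespace IsTriorthogonal

variable {F : Type} [Field F] {m n k : ℕ} {G : Fin m → Fin n → F} {σ : Fin n → F} {τ : Fin k → F}

theorem toBilin'_diagonal_apply (hG : IsTriorthogonal G σ τ) (a b : Fin m) :
    Matrix.toBilin' (Matrix.diagonal σ) (G a) (G b) =
      if h : a = b ∧ (a : ℕ) < k then τ ⟨a, h.2⟩ else 0 := by
  rw [← hG.2.2.2 a b, Matrix.toBilin'_apply', dotProduct]
  exact Finset.sum_congr rfl fun i _ => by rw [Matrix.mulVec_diagonal]; ring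

theorem isOrthoᵢ (hG : IsTriorthogonal G σ τ) :
    (Matrix.toBilin' (Matrix.diagonal σ)).IsOrthoᵢ G := fun a b hab =>
  (hG.toBilin'_diagonal_apply a b).trans (dif_neg fun h => hab h.1)

theorem toBilin'_diagonal_self_ne_zero (hG : IsTriorthogonal G σ τ) (hkm : k ≤ m) (a : Fin k) :
    Matrix.toBilin' (Matrix.diagonal σ) (G (Fin.castLE hkm a)) (G (Fin.castLE hkm a)) ≠ 0 := by
  rw [hG.toBilin'_diagonal_apply, dif_pos ⟨rfl, a.2⟩]
  exact hG.2.1 a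

end IsTriorthogonal

/-- If `G` is triorthogonal with parameter `k`, then `dim 𝒢 = k + dim 𝒢₀` and
`dim 𝒢^⊥ = n − k − dim 𝒢₀`, where `𝒢` is the row span and `𝒢₀` the span of the
last `m−k` rows (so the associated CSS code encodes exactly `k` qudits). -/
theorem finrank_rowspan_and_dual
    {s m n k : ℕ} (hs : 1 ≤ s) (hk : 1 ≤ k) (hkm : k ≤ m)
    {F : Type} [Field F] [Fintype F] (hF : Fintype.card F = 2 ^ s)
    (G : Fin m → Fin n → F) (σ : Fin n → F) (τ : Fin k → F)
    (hG : IsTriorthogonal G σ τ) :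
    Module.finrank F (Submodule.span F (Set.range G)) =
        k + Module.finrank F
          (Submodule.span F (Set.range fun a : Fin (m - k) => G ⟨k + (a : ℕ), by have := a.2; omega⟩)) ∧
    Module.finrank F (dualCode (Submodule.span F (Set.range G))) =
        n - k - Module.finrank F
          (Submodule.span F (Set.range fun a : Fin (m - k) => G ⟨k + (a : ℕ), by have := a.2; omega⟩)) :=
  finrank_rowspan_and_dual_general hkm G hG.isOrthoᵢ (hG.toBilin'_diagonal_self_ne_zero hkm)
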